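/- Let n ≥ 2, 1 ≤ l < n, and 0 < p < 1, and set p' = 2p(1−p). Let F be a random function from {0,1}^n to {0,1} on a probability space S such that the family (F(·)(x))_{x ∈ {0,1}^n} is 4-wise independent with P(F(·)(x) = 1) = p for every x. If 2^{3l} ≤ 2^n·p', then with probability at least 1/2 all 2^l subfunctions F_α, α ∈ {0,1}^l, obtained by fixing the first l input bits according to α, are pairwise distinct. -/

import Mathlib

open MeasureTheory

/-- `subInput n l α z` is the input in `{0,1}^n` whose first `l` bits are given
by `α` and whose remaining `n − l` bits are given by `z`. -/
def subInput (n l : ℕ) (α : Fin l → Bool) (z : Fin (n - l) → Bool) :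
    Fin n → Bool :=
  fun i =>
    if h : (i : ℕ) < l then α ⟨i, h⟩
    else z ⟨(i : ℕ) - l, by have := i.isLt; omega⟩

/-!
View the truth table of `F` as a random matrix with one row per subfunction. For two fixed rows,
4-wise independence makes the events that the rows differ in column `z` pairwise independent, each
of probability `p'`. By Chebyshev's inequality none of these `2^(n-l)` events occurs with
probability at most `1 / (2^(n-l) p')`, and a union bound over the at most `2^(2l) / 2` unordered
pairs of rows finishes the proof.
-/

open ProbabilityTheory Finset Function

section SecondMoment

variable {Ω ι : Type*} {mΩ : MeasurableSpace Ω} {μ : Measure Ω}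

theorem measureReal_eq_zero_mul_sq_integral_le_variance [IsFiniteMeasure μ] {X : Ω → ℝ}
    (hX : MemLp X 2 μ) : μ.real {ω | X ω = 0} * μ[X] ^ 2 ≤ Var[X; μ] := by
  rcases eq_or_ne μ[X] 0 with h0 | h0
  · simp [h0, variance_nonneg]
  have hsub : {ω | X ω = 0} ⊆ {ω | |μ[X]| ≤ |X ω - μ[X]|} := fun ω hω ↦ by
    simp only [Set.mem_ofPred_eq] at hω ⊢
    rw [hω, zero_sub, abs_neg]
  have hcheb : μ.real {ω | X ω = 0} ≤ Var[X; μ] / |μ[X]| ^ 2 :=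
    ENNReal.toReal_le_of_le_ofReal (by have := variance_nonneg X μ; positivity)
      ((measure_mono hsub).trans (meas_ge_le_variance_div_sq hX (abs_pos.2 h0)))
  rwa [sq_abs, le_div_iff₀ (by positivity)] at hcheb

theorem indepFun_indicator_one_of_indepSet {R : Type*} [Zero R] [One R] [MeasurableSpace R]
    {s t : Set Ω} (h : IndepSet s t μ) :
    IndepFun (s.indicator (1 : Ω → R)) (t.indicator (1 : Ω → R)) μ := by
  have comap_le (u : Set Ω) : MeasurableSpace.comap (u.indicator (1 : Ω → R)) inferInstance ≤
      MeasurableSpace.generateFrom {u} :=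
    Measurable.comap_le <| (@measurable_const _ _ _ (.generateFrom {u}) 1).indicator
      (MeasurableSpace.measurableSet_generateFrom rfl)
  exact indep_of_indep_of_le_left (indep_of_indep_of_le_right h (comap_le t)) (comap_le s)

theorem variance_indicator_one_le [IsProbabilityMeasure μ] {s : Set Ω} (hs : MeasurableSet s) :
    Var[s.indicator (1 : Ω → ℝ); μ] ≤ μ.real s := by
  have hsq : s.indicator (1 : Ω → ℝ) ^ 2 = s.indicator 1 := by
    ext ω
    by_cases hω : ω ∈ s <;> simp [hω]
  calc Var[s.indicator (1 : Ω → ℝ); μ] ≤ μ[s.indicator (1 : Ω → ℝ) ^ 2] :=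
        variance_le_expectation_sq (aestronglyMeasurable_const.indicator hs)
    _ = μ.real s := by rw [hsq, integral_indicator_one hs]

theorem measureReal_forall_notMem_mul_sum_le_one [IsProbabilityMeasure μ] [Fintype ι]
    {E : ι → Set Ω} (hE : ∀ i, MeasurableSet (E i))
    (hindep : Pairwise fun i j ↦ IndepSet (E i) (E j) μ) :
    μ.real {ω | ∀ i, ω ∉ E i} * ∑ i, μ.real (E i) ≤ 1 := by
  set X : Ω → ℝ := ∑ i, (E i).indicator 1 with hX
  have hmem (i : ι) : MemLp ((E i).indicator (1 : Ω → ℝ)) 2 μ := (memLp_const 1).indicator (hE i)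
  have hzero : {ω | ∀ i, ω ∉ E i} = {ω | X ω = 0} := by
    ext ω
    simp [hX, Finset.sum_apply, sum_eq_zero_iff_of_nonneg, Set.indicator_nonneg]
  have hmean : μ[X] = ∑ i, μ.real (E i) := by
    simp only [hX, Finset.sum_apply]
    rw [integral_finsetSum _ fun i _ ↦ (hmem i).integrable one_le_two]
    exact sum_congr rfl fun i _ ↦ integral_indicator_one (hE i)
  have hvar : Var[X; μ] ≤ ∑ i, μ.real (E i) := by
    rw [hX, IndepFun.variance_sum (fun i _ ↦ hmem i)
      fun i _ j _ hij ↦ indepFun_indicator_one_of_indepSet (hindep hij)]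
    exact sum_le_sum fun i _ ↦ variance_indicator_one_le (hE i)
  have hsecond := measureReal_eq_zero_mul_sq_integral_le_variance
    (memLp_finsetSum' univ fun i _ ↦ hmem i : MemLp X 2 μ)
  rw [hmean, ← hzero] at hsecond
  have hnonneg : 0 ≤ ∑ i, μ.real (E i) := sum_nonneg fun _ _ ↦ measureReal_nonneg
  rcases hnonneg.eq_or_lt with h0 | hpos
  · simp [← h0]
  · exact le_of_mul_le_mul_right (by linarith) hpos

theorem measureReal_not_injective_le {α β : Type*} [Fintype α] [IsFiniteMeasure μ]
    {f : Ω → α → β} {c : ℝ} (hc : ∀ a b, a ≠ b → μ.real {ω | f ω a = f ω b} ≤ c) :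
    μ.real {ω | ¬ Injective (f ω)} ≤ (Fintype.card α).choose 2 * c := by
  classical
  let collision (s : Finset α) : Set Ω := {ω | ∀ a ∈ s, ∀ b ∈ s, f ω a = f ω b}
  have hcover : {ω | ¬ Injective (f ω)} ⊆ ⋃ s ∈ powersetCard 2 univ, collision s := by
    intro ω hω
    obtain ⟨a, b, hab, hne⟩ := not_injective_iff.1 hω
    refine Set.mem_biUnion (x := {a, b}) (by simp [card_pair hne]) ?_
    simp [collision, hab]
  have hcollision : ∀ s ∈ powersetCard 2 (univ : Finset α), μ.real (collision s) ≤ c := by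
    intro s hs
    obtain ⟨a, b, hne, rfl⟩ := card_eq_two.1 (mem_powersetCard.1 hs).2
    have hsub : collision {a, b} ⊆ {ω | f ω a = f ω b} :=
      fun ω hω ↦ hω a (by simp) b (by simp)
    exact (measureReal_mono hsub).trans (hc a b hne)
  calc μ.real {ω | ¬ Injective (f ω)}
      ≤ μ.real (⋃ s ∈ powersetCard 2 univ, collision s) :=
        measureReal_mono hcover (measure_ne_top _ _)
    _ ≤ ∑ s ∈ powersetCard 2 univ, μ.real (collision s) := measureReal_biUnion_finset_le _ _
    _ ≤ #(powersetCard 2 (univ : Finset α)) • c := sum_le_card_nsmul _ _ _ hcollision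
    _ = (Fintype.card α).choose 2 * c := by
        rw [card_powersetCard, card_univ, nsmul_eq_mul]

end SecondMoment

section Independence

variable {Ω ι : Type*} {mΩ : MeasurableSpace Ω} {μ : Measure Ω}

theorem iIndepFun_of_measureReal_forall_eq_prod [IsProbabilityMeasure μ] [Fintype ι]
    {κ : ι → Type*} [∀ i, Countable (κ i)] [∀ i, MeasurableSpace (κ i)]
    [∀ i, MeasurableSingletonClass (κ i)] {X : ∀ i, Ω → κ i} (hX : ∀ i, Measurable (X i))
    (h : ∀ v : ∀ i, κ i, μ.real {ω | ∀ i, X i ω = v i} = ∏ i, μ.real {ω | X i ω = v i}) :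
    iIndepFun X μ := by
  rw [iIndepFun_iff_map_fun_eq_pi_map fun i ↦ (hX i).aemeasurable]
  have (i : ι) : IsProbabilityMeasure (μ.map (X i)) :=
    Measure.isProbabilityMeasure_map (hX i).aemeasurable
  refine Measure.ext_of_singleton fun v ↦ ?_
  rw [Measure.pi_singleton, Measure.map_apply (measurable_pi_lambda _ hX) (.singleton v)]
  simp_rw [Measure.map_apply (hX _) (.singleton _)]
  rw [← ENNReal.toReal_eq_toReal_iff' (measure_ne_top _ _)
    (ENNReal.prod_ne_top fun i _ ↦ measure_ne_top _ _), ENNReal.toReal_prod]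
  simpa [Measure.real, Set.preimage, funext_iff] using h v

theorem measureReal_ne_of_indepFun_bool [IsProbabilityMeasure μ] {X Y : Ω → Bool}
    (h : IndepFun X Y μ) (hX : Measurable X) (hY : Measurable Y) :
    μ.real {ω | X ω ≠ Y ω} =
      μ.real {ω | X ω = true} * (1 - μ.real {ω | Y ω = true}) +
        (1 - μ.real {ω | X ω = true}) * μ.real {ω | Y ω = true} := by
  have hmeas {Z : Ω → Bool} (hZ : Measurable Z) (b : Bool) : MeasurableSet {ω | Z ω = b} :=
    hZ (.singleton b)
  have hfalse {Z : Ω → Bool} (hZ : Measurable Z) :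
      μ.real {ω | Z ω = false} = 1 - μ.real {ω | Z ω = true} := by
    rw [← probReal_compl_eq_one_sub (hmeas hZ true)]
    congr 1
    ext
    simp
  have hprod (b c : Bool) : μ.real ({ω | X ω = b} ∩ {ω | Y ω = c}) =
      μ.real {ω | X ω = b} * μ.real {ω | Y ω = c} :=
    congrArg ENNReal.toReal (h.measure_inter_preimage_eq_mul {b} {c} (.singleton b)
      (.singleton c)) |>.trans ENNReal.toReal_mul
  have hsplit : {ω | X ω ≠ Y ω} =
      {ω | X ω = true} ∩ {ω | Y ω = false} ∪ {ω | X ω = false} ∩ {ω | Y ω = true} := by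
    ext ω
    cases hx : X ω <;> cases hy : Y ω <;> simp [hx, hy]
  have hdisj : Disjoint ({ω | X ω = true} ∩ {ω | Y ω = false})
      ({ω | X ω = false} ∩ {ω | Y ω = true}) :=
    Set.disjoint_left.2 fun ω hω hω' ↦ Bool.false_ne_true (hω'.1.symm.trans hω.1)
  rw [hsplit, measureReal_union hdisj ((hmeas hX false).inter (hmeas hY true)), hprod, hprod,
    hfalse hX, hfalse hY]

/-- `k`-wise independence of a family of random variables: any `k` members with distinct indices
are mutually independent. As in the usual definition only subfamilies of size exactly `k` are
constrained, so the condition is void if there are fewer than `k` indices. -/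
def KWiseIndepFun {κ : ι → Type*} [∀ i, MeasurableSpace (κ i)] (k : ℕ) (X : ∀ i, Ω → κ i)
    (μ : Measure Ω) : Prop :=
  ∀ s : Finset ι, #s = k → iIndepFun (s.restrict X) μ

namespace KWiseIndepFun

variable {κ : ι → Type*} [∀ i, MeasurableSpace (κ i)] {X : ∀ i, Ω → κ i} {j k : ℕ}

theorem mono [Fintype ι] (h : KWiseIndepFun k X μ) (hjk : j ≤ k) (hk : k ≤ Fintype.card ι) :
    KWiseIndepFun j X μ := by
  intro s hs
  obtain ⟨t, hst, ht⟩ := exists_superset_card_eq (hs.trans_le hjk) hk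
  exact (h t ht).precomp (g := Set.inclusion hst) (Set.inclusion_injective hst)

theorem precomp {ι' : Type*} {g : ι' → ι} (h : KWiseIndepFun k X μ) (hg : Injective g) :
    KWiseIndepFun k (fun i ↦ X (g i)) μ := by
  intro s hs
  have hmem (i : s) : g i ∈ s.map ⟨g, hg⟩ := mem_map_of_mem ⟨g, hg⟩ i.2
  exact (h (s.map ⟨g, hg⟩) (by rw [card_map, hs])).precomp (g := fun i ↦ ⟨g i, hmem i⟩)
    fun i i' hii' ↦ Subtype.ext (hg (congrArg Subtype.val hii'))

theorem indepFun (h : KWiseIndepFun 2 X μ) {x y : ι} (hxy : x ≠ y) :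
    IndepFun (X x) (X y) μ := by
  classical
  exact (h {x, y} (card_pair hxy)).indepFun (i := ⟨x, by simp⟩) (j := ⟨y, by simp⟩)
    (by simpa using hxy)

theorem indepFun_prodMk_prodMk (h : KWiseIndepFun 4 X μ) (hX : ∀ i, Measurable (X i))
    {w x y z : ι} (hwx : w ≠ x) (hwy : w ≠ y) (hwz : w ≠ z) (hxy : x ≠ y) (hxz : x ≠ z)
    (hyz : y ≠ z) : IndepFun (fun ω ↦ (X w ω, X x ω)) (fun ω ↦ (X y ω, X z ω)) μ := by
  classical
  have hcard : #{w, x, y, z} = 4 := by simp [*]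
  exact (h {w, x, y, z} hcard).indepFun_prodMk_prodMk (fun i ↦ hX i)
    ⟨w, by simp⟩ ⟨x, by simp⟩ ⟨y, by simp⟩ ⟨z, by simp⟩ (by simpa) (by simpa) (by simpa) (by simpa)

end KWiseIndepFun

theorem kWiseIndepFun_four_of_measureReal_eq_mul [IsProbabilityMeasure μ] {κ : ι → Type*}
    [∀ i, Countable (κ i)] [∀ i, MeasurableSpace (κ i)] [∀ i, MeasurableSingletonClass (κ i)]
    {X : ∀ i, Ω → κ i} (hX : ∀ i, Measurable (X i))
    (h : ∀ x₁ x₂ x₃ x₄ : ι,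
      x₁ ≠ x₂ → x₁ ≠ x₃ → x₁ ≠ x₄ → x₂ ≠ x₃ → x₂ ≠ x₄ → x₃ ≠ x₄ →
      ∀ (v₁ : κ x₁) (v₂ : κ x₂) (v₃ : κ x₃) (v₄ : κ x₄),
        μ.real {ω | X x₁ ω = v₁ ∧ X x₂ ω = v₂ ∧ X x₃ ω = v₃ ∧ X x₄ ω = v₄} =
          μ.real {ω | X x₁ ω = v₁} * μ.real {ω | X x₂ ω = v₂} *
          μ.real {ω | X x₃ ω = v₃} * μ.real {ω | X x₄ ω = v₄}) :
    KWiseIndepFun 4 X μ := by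
  intro s hs
  let e : Fin 4 ≃ s := (s.equivFinOfCardEq hs).symm
  have hne {i j : Fin 4} (hij : i ≠ j) : (e i : ι) ≠ e j :=
    fun h ↦ hij (e.injective (Subtype.ext h))
  refine iIndepFun.of_precomp e.surjective
    (iIndepFun_of_measureReal_forall_eq_prod (fun i ↦ hX (e i)) fun v ↦ ?_)
  simpa [Fin.forall_fin_succ, Fin.prod_univ_four]
    using h (e 0) (e 1) (e 2) (e 3) (hne (by decide)) (hne (by decide)) (hne (by decide))
      (hne (by decide)) (hne (by decide)) (hne (by decide)) (v 0) (v 1) (v 2) (v 3)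

end Independence

section RandomMatrix

variable {Ω A B κ : Type*} {mΩ : MeasurableSpace Ω} {μ : Measure Ω} [IsProbabilityMeasure μ]
  [Fintype B] [MeasurableSpace κ] [MeasurableEq κ] {F : Ω → A → B → κ}

theorem measureReal_row_eq_mul_sum_ne_le_one (hmeas : ∀ a b, Measurable fun ω ↦ F ω a b)
    (hF : KWiseIndepFun 4 (fun (i : A × B) ω ↦ F ω i.1 i.2) μ) {a a' : A} (ha : a ≠ a') :
    μ.real {ω | F ω a = F ω a'} * ∑ b, μ.real {ω | F ω a b ≠ F ω a' b} ≤ 1 := by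
  have hne : MeasurableSet {v : κ × κ | v.1 ≠ v.2} := measurableSet_diagonal.compl
  have hpair (b : B) : Measurable fun ω ↦ (F ω a b, F ω a' b) := (hmeas a b).prodMk (hmeas a' b)
  have hindep : Pairwise fun b b' ↦
      IndepSet {ω | F ω a b ≠ F ω a' b} {ω | F ω a b' ≠ F ω a' b'} μ := fun b b' hb ↦
    (indepFun_iff_indepSet_preimage (hpair b) (hpair b')).1
      (hF.indepFun_prodMk_prodMk (fun i ↦ hmeas i.1 i.2) (w := (a, b)) (x := (a', b))
        (y := (a, b')) (z := (a', b')) (by simp [ha]) (by simp [hb]) (by simp [ha])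
        (by simp [ha.symm]) (by simp [hb]) (by simp [ha])) _ _ hne hne
  simpa [funext_iff] using
    measureReal_forall_notMem_mul_sum_le_one (fun b ↦ hpair b hne) hindep

theorem stmt_10_general [Fintype A] (hmeas : ∀ a b, Measurable fun ω ↦ F ω a b)
    (hF : KWiseIndepFun 4 (fun (i : A × B) ω ↦ F ω i.1 i.2) μ) {q : ℝ}
    (hq : ∀ a a', a ≠ a' → ∀ b, q ≤ μ.real {ω | F ω a b ≠ F ω a' b})
    (hsize : (Fintype.card A : ℝ) ^ 2 ≤ Fintype.card B * q) :
    1 / 2 ≤ μ.real {ω | Injective (F ω)} := by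
  rcases isEmpty_or_nonempty A with hA | hA
  · norm_num [injective_of_subsingleton]
  have hA0 : (0 : ℝ) < Fintype.card A ^ 2 := by positivity
  have hrow (a a' : A) (ha : a ≠ a') :
      μ.real {ω | F ω a = F ω a'} ≤ 1 / (Fintype.card A : ℝ) ^ 2 := by
    rw [le_div_iff₀ hA0]
    refine le_trans ?_ (measureReal_row_eq_mul_sum_ne_le_one hmeas hF ha)
    refine mul_le_mul_of_nonneg_left (hsize.trans ?_) measureReal_nonneg
    simpa using card_nsmul_le_sum univ _ q fun b _ ↦ hq a a' ha b
  have hnot : μ.real {ω | ¬ Injective (F ω)} ≤ 1 / 2 :=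
    calc μ.real {ω | ¬ Injective (F ω)}
        ≤ (Fintype.card A).choose 2 * (1 / (Fintype.card A : ℝ) ^ 2) :=
          measureReal_not_injective_le hrow
      _ ≤ (Fintype.card A : ℝ) ^ 2 / (2).factorial * (1 / (Fintype.card A : ℝ) ^ 2) := by
          gcongr
          exact Nat.choose_le_pow_div 2 _
      _ = 1 / 2 := by
          rw [Nat.factorial_two]
          field_simp
          norm_num
  have hunion := measureReal_union_le (μ := μ) {ω | Injective (F ω)} {ω | Injective (F ω)}ᶜ
  rw [Set.union_compl_self, probReal_univ, Set.compl_ofPred] at hunion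
  linarith

end RandomMatrix

theorem subInput_injective2 {n l : ℕ} (hl : l ≤ n) : Injective2 (subInput n l) := by
  refine fun α β z w h ↦ ⟨funext fun i ↦ ?_, funext fun i ↦ ?_⟩
  · simpa [subInput] using congrFun h ⟨i, by omega⟩
  · simpa [subInput] using congrFun h ⟨l + i, by omega⟩

theorem pow_sq_le_of_pow_three_mul_le {n l : ℕ} (hl : l ≤ n) {a q : ℝ} (ha : 0 < a)
    (h : a ^ (3 * l) ≤ a ^ n * q) : (a ^ l) ^ 2 ≤ a ^ (n - l) * q := by
  refine le_of_mul_le_mul_left ?_ (pow_pos ha l)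
  calc a ^ l * (a ^ l) ^ 2 = a ^ (3 * l) := by ring
    _ ≤ a ^ n * q := h
    _ = a ^ l * (a ^ (n - l) * q) := by rw [← mul_assoc, pow_mul_pow_sub a hl]

/-- For a random function `F : {0,1}^n → {0,1}` whose values are
4-wise independent with one-probability `p`, if `2^{3l} ≤ 2^n·p'` with
`p' = 2p(1−p)`, then with probability at least `1/2` all `2^l` subfunctions
`F_α`, `α ∈ {0,1}^l`, are pairwise distinct. -/
theorem stmt_10 {Ω : Type*} [MeasurableSpace Ω] (μ : Measure Ω)
    [IsProbabilityMeasure μ]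
    (n l : ℕ) (hn : 2 ≤ n) (hl : 1 ≤ l) (hln : l < n)
    (p : ℝ) (hp0 : 0 < p) (hp1 : p < 1)
    (F : Ω → (Fin n → Bool) → Bool)
    (hmeas : ∀ x, Measurable (fun s => F s x))
    (hbias : ∀ x, (μ {s | F s x = true}).toReal = p)
    (hind : ∀ x₁ x₂ x₃ x₄ : Fin n → Bool,
      x₁ ≠ x₂ → x₁ ≠ x₃ → x₁ ≠ x₄ → x₂ ≠ x₃ → x₂ ≠ x₄ → x₃ ≠ x₄ →
      ∀ l₁ l₂ l₃ l₄ : Bool,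
        (μ {s | F s x₁ = l₁ ∧ F s x₂ = l₂ ∧ F s x₃ = l₃ ∧ F s x₄ = l₄}).toReal =
          (μ {s | F s x₁ = l₁}).toReal * (μ {s | F s x₂ = l₂}).toReal *
          (μ {s | F s x₃ = l₃}).toReal * (μ {s | F s x₄ = l₄}).toReal)
    (hsize : (2 : ℝ) ^ (3 * l) ≤ 2 ^ n * (2 * p * (1 - p))) :
    1 / 2 ≤ (μ {s | Function.Injective
      (fun α : Fin l → Bool => fun z : Fin (n - l) → Bool =>
        F s (subInput n l α z))}).toReal := by
  have hfour : KWiseIndepFun 4 (fun x s ↦ F s x) μ :=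
    kWiseIndepFun_four_of_measureReal_eq_mul hmeas hind
  have hcard : 4 ≤ Fintype.card (Fin n → Bool) := by
    simpa using Nat.pow_le_pow_right two_pos hn
  have hpair : KWiseIndepFun 2 (fun x s ↦ F s x) μ := hfour.mono (by norm_num) hcard
  have hne (x y : Fin n → Bool) (hxy : x ≠ y) : μ.real {s | F s x ≠ F s y} = 2 * p * (1 - p) := by
    rw [measureReal_ne_of_indepFun_bool (hpair.indepFun hxy) (hmeas x) (hmeas y), Measure.real,
      Measure.real, hbias, hbias]
    ring
  have hinj := subInput_injective2 hln.le
  refine stmt_10_general (fun α z ↦ hmeas (subInput n l α z)) (hfour.precomp hinj.uncurry)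
    (q := 2 * p * (1 - p)) (fun α β hαβ z ↦ (hne _ _ fun h ↦ hαβ (hinj h).1).ge) ?_
  simpa using pow_sq_le_of_pow_three_mul_le hln.le two_pos hsize
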